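/- If the analysis operator C of a sequence (ψ_k) is densely defined, then the frame operator S is closable. -/

import Mathlib

open Filter Topology
open scoped ComplexInnerProductSpace

theorem aux_finite {H : Type*} [NormedAddCommGroup H] [InnerProductSpace ℂ H]
    (ψ : ℕ → H) (f g : H) (n : ℕ) :
    ‖⟪g, ∑ k ∈ Finset.range n, ⟪ψ k, f⟫ • ψ k⟫‖ ^ 2 ≤
      (∑ k ∈ Finset.range n, ‖⟪ψ k, g⟫‖ ^ 2) *
        (⟪f, ∑ k ∈ Finset.range n, ⟪ψ k, f⟫ • ψ k⟫).re := by
  have h1 : (⟪f, ∑ k ∈ Finset.range n, ⟪ψ k, f⟫ • ψ k⟫).re =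
      ∑ k ∈ Finset.range n, ‖⟪ψ k, f⟫‖ ^ 2 := by
    rw [inner_sum, Complex.re_sum]
    refine Finset.sum_congr rfl fun k _ => ?_
    rw [inner_smul_right, ← inner_conj_symm f (ψ k), Complex.mul_conj,
      Complex.normSq_eq_norm_sq, Complex.ofReal_re]
  have h2 : ‖⟪g, ∑ k ∈ Finset.range n, ⟪ψ k, f⟫ • ψ k⟫‖ ≤
      ∑ k ∈ Finset.range n, ‖⟪ψ k, g⟫‖ * ‖⟪ψ k, f⟫‖ := by
    rw [inner_sum]
    refine (norm_sum_le _ _).trans (le_of_eq (Finset.sum_congr rfl fun k _ => ?_))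
    rw [inner_smul_right, norm_mul, norm_inner_symm g, mul_comm]
  rw [h1]
  exact (pow_le_pow_left₀ (norm_nonneg _) h2 2).trans (Finset.sum_mul_sq_le_sq_mul_sq _ _ _)

theorem aux_closed {H : Type*} [NormedAddCommGroup H] [InnerProductSpace ℂ H]
    (ψ : ℕ → H) (g : H) (hg : Memℓp (fun k => ⟪ψ k, g⟫) 2) (p : H × H)
    (hp : p ∈ closure {p : H × H |
        Tendsto (fun n => ∑ k ∈ Finset.range n, ⟪ψ k, p.1⟫ • ψ k) atTop (𝓝 p.2)}) :
    ‖⟪g, p.2⟫‖ ^ 2 ≤ (∑' k, ‖⟪ψ k, g⟫‖ ^ 2) * (⟪p.1, p.2⟫).re := by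
  have hs : Summable fun k => ‖⟪ψ k, g⟫‖ ^ 2 := by
    have := hg.summable (by norm_num)
    simpa using this
  have hc : IsClosed {p : H × H |
      ‖⟪g, p.2⟫‖ ^ 2 ≤ (∑' k, ‖⟪ψ k, g⟫‖ ^ 2) * (⟪p.1, p.2⟫).re} := by
    refine isClosed_le (by fun_prop) ?_
    exact continuous_const.mul (Complex.continuous_re.comp (continuous_fst.inner continuous_snd))
  refine closure_minimal ?_ hc hp
  rintro ⟨f, y⟩ h
  simp only [Set.mem_ofPred_eq] at h ⊢
  have hl : Tendsto (fun n => ‖⟪g, ∑ k ∈ Finset.range n, ⟪ψ k, f⟫ • ψ k⟫‖ ^ 2) atTop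
      (𝓝 (‖⟪g, y⟫‖ ^ 2)) := ((tendsto_const_nhds.inner h).norm).pow 2
  have hr := hs.hasSum.tendsto_sum_nat.mul
    ((Complex.continuous_re.tendsto _).comp
      ((tendsto_const_nhds (x := f)).inner (𝕜 := ℂ) h))
  exact le_of_tendsto_of_tendsto' hl hr fun n => aux_finite ψ f g n

/-- The graph of the frame operator. -/
def auxGraph {H : Type*} [NormedAddCommGroup H] [InnerProductSpace ℂ H]
    (ψ : ℕ → H) : AddSubgroup (H × H) where
  carrier := {p : H × H |
        Tendsto (fun n => ∑ k ∈ Finset.range n, ⟪ψ k, p.1⟫ • ψ k) atTop (𝓝 p.2)}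
  zero_mem' := by simp
  add_mem' := by
    intro a b ha hb
    simpa [inner_add_right, add_smul, Finset.sum_add_distrib] using Tendsto.add ha hb
  neg_mem' := by
    intro a ha
    simpa [inner_neg_right] using Tendsto.neg ha

/-- If the analysis operator `C` of a sequence `(ψ k)` is densely defined, then the frame
operator `S` is closable, i.e. the closure of the graph of `S` is again the graph of an
operator (equivalently, `S` admits a closed extension). -/
theorem stmt9 {H : Type*} [NormedAddCommGroup H] [InnerProductSpace ℂ H] [CompleteSpace H]
    (ψ : ℕ → H)
    (hdense : Dense {f : H | Memℓp (fun k => ⟪ψ k, f⟫) 2}) :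
    ∀ (f y₁ y₂ : H),
      (f, y₁) ∈ closure {p : H × H |
        Tendsto (fun n => ∑ k ∈ Finset.range n, ⟪ψ k, p.1⟫ • ψ k) atTop (𝓝 p.2)} →
      (f, y₂) ∈ closure {p : H × H |
        Tendsto (fun n => ∑ k ∈ Finset.range n, ⟪ψ k, p.1⟫ • ψ k) atTop (𝓝 p.2)} →
      y₁ = y₂ := by
  intro f y₁ y₂ h₁ h₂
  have h : (f, y₁) - (f, y₂) ∈ (auxGraph ψ).topologicalClosure :=
    sub_mem (show (f, y₁) ∈ (auxGraph ψ).topologicalClosure from h₁) h₂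
  have key : ∀ g : H, ⟪g, y₁ - y₂⟫ = 0 := by
    intro g
    have hc : IsClosed {g : H | ⟪g, y₁ - y₂⟫ = 0} :=
      isClosed_eq (by fun_prop) continuous_const
    refine closure_minimal ?_ hc (hdense g)
    intro g hg
    have := aux_closed ψ g hg _ h
    simp only [Prod.mk_sub_mk, sub_self, inner_zero_left, Complex.zero_re, mul_zero] at this
    have h0 := pow_eq_zero_iff (two_ne_zero) |>.1 (le_antisymm this (sq_nonneg _))
    exact norm_eq_zero.1 h0
  exact sub_eq_zero.1 (inner_self_eq_zero.1 (key (y₁ - y₂)))
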